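/- arXiv:2506.07571 — 2 statements merged into one kernel-verified Lean document; each statement's English description precedes it below -/
import Mathlib

section
/- For every α with 0 < α ≤ π/3 there is a constant c = c(α) > 0 with the following property. For every finite family (Δ_i)_{i ∈ I} of α-fat triangles in ℝ² with |I| = n ≥ 1, there exists a partition 𝒫 of the index set I such that: (a) each part P ∈ 𝒫 is stabbed, i.e. there is a point contained in every triangle Δ_i with i ∈ P; and (b) for every point x ∈ ℝ², the number of parts P ∈ 𝒫 whose union ⋃_{i∈P} Δ_i contains x is at most c · (log₂ n + 1). -/
/-!
Fatness is used only through one consequence: each `T i` is convex, lies in a ball of some radius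
`d i` and contains the concentric ball of radius `κ * d i`. Two ingredients then give the bound, in
any dimension.

*Shifted grids.* Consider the dyadic cubical grids of mesh `R / 2 ^ k` whose origin has all its
coordinates in `{0, R / 3}`. As `3` does not divide `2 ^ k`, in each coordinate the hyperplanes of
the two grids of mesh `r = R / 2 ^ k` stay at distance at least `r / 3` from each other, so for a
suitable origin some cell of side less than `14 * d i` contains `T i`. Among the sets using the
same origin, the assigned cells `Q i` form a laminar family. Moreover, the sets that meet a given
cube and whose size is at least a constant times its side are stabbed by boundedly many points:
shrinking such a set towards a point of the cube yields a ball of radius comparable to the side,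
and this ball contains a point of a fixed fine net.

*Halving.* Suppose that each cell contains fewer than `2 * h` of the cells `Q i`, and call a cell
heavy if it contains at least `h` of them. Two disjoint heavy cells cannot lie in a common cell, so
below each heavy cell there is a unique minimal one. The sets assigned to a heavy cell and meeting
the minimal heavy cell below it are stabbed by boundedly many points. Of the remaining sets, those
assigned to cells inside minimal heavy cells are disjoint from those that are not, and in both
classes each cell contains fewer than `h` cells of its class. Hence each halving costs a bounded
number of parts per point, and about `log₂ n` halvings exhaust the family.
-/

open Metric

/-- An `α`-fat triangle in the Euclidean plane: the convex hull of three affinely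
independent points, each of whose interior angles is at least `α`. -/
def IsFatTriangle (α : ℝ) (Δ : Set (EuclideanSpace ℝ (Fin 2))) : Prop :=
  ∃ u v w : EuclideanSpace ℝ (Fin 2),
    AffineIndependent ℝ ![u, v, w] ∧
    Δ = convexHull ℝ {u, v, w} ∧
    α ≤ EuclideanGeometry.angle w u v ∧
    α ≤ EuclideanGeometry.angle u v w ∧
    α ≤ EuclideanGeometry.angle v w u

section StabbedCover

variable {I E : Type*} {T : I → Set E} {s t : Set I} {A B : ℕ∞}

/-- The subfamily `s` of `T` is the union of subfamilies, each with a common point, such that at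
most `B` of their unions share a point. The subfamilies need not be disjoint. -/
def HasStabbedCover (T : I → Set E) (s : Set I) (B : ℕ∞) : Prop :=
  ∃ F : Set (Set I), ⋃₀ F = s ∧ (∀ P ∈ F, ∃ x, ∀ i ∈ P, x ∈ T i) ∧
    ∀ x, {P ∈ F | ∃ i ∈ P, x ∈ T i}.encard ≤ B

lemma HasStabbedCover.empty : HasStabbedCover T ∅ B :=
  ⟨∅, by simp⟩

lemma HasStabbedCover.of_stabbing_set {S : Set E} (hS : ∀ i ∈ s, ∃ p ∈ S, p ∈ T i) :
    HasStabbedCover T s S.encard := by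
  refine ⟨(fun p => {i ∈ s | p ∈ T i}) '' S, ?_, ?_, fun x => ?_⟩
  · ext i
    simpa using hS i
  · rintro _ ⟨p, -, rfl⟩
    exact ⟨p, fun i hi => hi.2⟩
  · exact (Set.encard_le_encard (Set.sep_subset _ _)).trans (Set.encard_image_le _ _)

lemma HasStabbedCover.mono (h : HasStabbedCover T s A) (hAB : A ≤ B) : HasStabbedCover T s B :=
  let ⟨F, hF, hst, hply⟩ := h
  ⟨F, hF, hst, fun x => (hply x).trans hAB⟩

lemma HasStabbedCover.union (hs : HasStabbedCover T s A) (ht : HasStabbedCover T t B) :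
    HasStabbedCover T (s ∪ t) (A + B) := by
  obtain ⟨F, rfl, hFst, hFply⟩ := hs
  obtain ⟨G, rfl, hGst, hGply⟩ := ht
  refine ⟨F ∪ G, Set.sUnion_union F G, fun P hP => hP.elim (hFst P) (hGst P), fun x => ?_⟩
  calc {P ∈ F ∪ G | ∃ i ∈ P, x ∈ T i}.encard
      = ({P ∈ F | ∃ i ∈ P, x ∈ T i} ∪ {P ∈ G | ∃ i ∈ P, x ∈ T i}).encard := by
        congr 1
        ext P
        simp [or_and_right]
    _ ≤ A + B := (Set.encard_union_le _ _).trans (add_le_add (hFply x) (hGply x))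

lemma HasStabbedCover.iUnion {κ : Type*} [Fintype κ] {s : κ → Set I}
    (h : ∀ a, HasStabbedCover T (s a) B) :
    HasStabbedCover T (⋃ a, s a) (Fintype.card κ * B) := by
  choose F hF hst hply using h
  refine ⟨⋃ a, F a, by simp only [Set.sUnion_iUnion, hF], fun P hP => ?_, fun x => ?_⟩
  · obtain ⟨a, ha⟩ := Set.mem_iUnion.1 hP
    exact hst a P ha
  · calc {P ∈ ⋃ a, F a | ∃ i ∈ P, x ∈ T i}.encard
        = (⋃ a, {P ∈ F a | ∃ i ∈ P, x ∈ T i}).encard := by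
          congr 1
          ext P
          simp
      _ ≤ ∑ a, {P ∈ F a | ∃ i ∈ P, x ∈ T i}.encard := Set.encard_iUnion_le_of_fintype _
      _ ≤ ∑ _a : κ, B := Finset.sum_le_sum fun a _ => hply a x
      _ = Fintype.card κ * B := by simp

lemma HasStabbedCover.iUnion_of_disjoint {κ : Type*} {s : κ → Set I}
    (h : ∀ a, HasStabbedCover T (s a) B)
    (hdisj : Pairwise fun a b => ∀ i ∈ s a, ∀ j ∈ s b, Disjoint (T i) (T j)) :
    HasStabbedCover T (⋃ a, s a) B := by
  choose F hF hst hply using h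
  have mem_of_mem {a : κ} {P : Set I} (hP : P ∈ F a) {i : I} (hi : i ∈ P) : i ∈ s a :=
    hF a ▸ Set.mem_sUnion_of_mem hi hP
  refine ⟨⋃ a, F a, by simp only [Set.sUnion_iUnion, hF], fun P hP => ?_, fun x => ?_⟩
  · obtain ⟨a, ha⟩ := Set.mem_iUnion.1 hP
    exact hst a P ha
  · rcases Set.eq_empty_or_nonempty {P ∈ ⋃ a, F a | ∃ i ∈ P, x ∈ T i} with h | h
    · rw [h, Set.encard_empty]
      exact zero_le
    obtain ⟨P, hP, i, hiP, hxi⟩ := h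
    obtain ⟨a, ha⟩ := Set.mem_iUnion.1 hP
    refine (Set.encard_le_encard ?_).trans (hply a x)
    rintro P' ⟨hP', j, hjP', hxj⟩
    obtain ⟨b, hb⟩ := Set.mem_iUnion.1 hP'
    have hab : a = b := by
      by_contra hab
      exact Set.disjoint_left.1
        (hdisj hab i (mem_of_mem ha hiP) j (mem_of_mem hb hjP')) hxi hxj
    exact ⟨hab ▸ hb, j, hjP', hxj⟩

lemma HasStabbedCover.union_of_disjoint (hs : HasStabbedCover T s B) (ht : HasStabbedCover T t B)
    (hdisj : ∀ i ∈ s, ∀ j ∈ t, Disjoint (T i) (T j)) : HasStabbedCover T (s ∪ t) B := by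
  rw [Set.union_eq_iUnion]
  refine HasStabbedCover.iUnion_of_disjoint (Bool.forall_bool.2 ⟨ht, hs⟩) ?_
  rintro (_ | _) (_ | _) hab
  · exact absurd rfl hab
  · exact fun i hi j hj => (hdisj j hj i hi).symm
  · exact hdisj
  · exact absurd rfl hab

lemma HasStabbedCover.exists_finpartition [Fintype I] [DecidableEq I] {B : ℕ}
    (h : HasStabbedCover T Set.univ B) :
    ∃ Part : Finpartition (Finset.univ : Finset I),
      (∀ P ∈ Part.parts, ∃ x, ∀ i ∈ P, x ∈ T i) ∧
      ∀ x, {P : Finset I | P ∈ Part.parts ∧ ∃ i ∈ P, x ∈ T i}.ncard ≤ B := by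
  classical
  obtain ⟨F, hF, hst, hply⟩ := h
  have hcover (i : I) : ∃ P ∈ F, i ∈ P := Set.mem_sUnion.1 (hF ▸ Set.mem_univ i)
  choose g hgF hg using hcover
  let fiber (P : Set I) : Finset I := {i | g i = P}
  have eq_fiber : ∀ P ∈ (Finpartition.ofSetoid (Setoid.ker g)).parts, ∀ i ∈ P,
      P = fiber (g i) := by
    intro P hP i hi
    rw [← Finpartition.part_eq_of_mem _ hP hi]
    ext k
    simp [fiber, Finpartition.mem_part_ofSetoid_iff_rel, Setoid.ker_def, eq_comm]
  refine ⟨Finpartition.ofSetoid (Setoid.ker g), fun P hP => ?_, fun x => ?_⟩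
  · obtain ⟨i, hi⟩ := Finpartition.nonempty_of_mem_parts _ hP
    obtain ⟨x, hx⟩ := hst (g i) (hgF i)
    refine ⟨x, fun k hk => hx k ?_⟩
    rw [eq_fiber P hP i hi] at hk
    exact (Finset.mem_filter.1 hk).2 ▸ hg k
  · have hsub : {P : Finset I | P ∈ (Finpartition.ofSetoid (Setoid.ker g)).parts ∧
        ∃ i ∈ P, x ∈ T i} ⊆ fiber '' {P ∈ F | ∃ i ∈ P, x ∈ T i} := by
      rintro P ⟨hP, i, hi, hxi⟩
      exact ⟨g i, ⟨hgF i, i, hg i, hxi⟩, (eq_fiber P hP i hi).symm⟩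
    exact (Set.encard_le_coe_iff_finite_ncard_le.1
      (((Set.encard_le_encard hsub).trans (Set.encard_image_le _ _)).trans (hply x))).2

end StabbedCover

section Halving

variable {I E : Type*}

/-- The number of `Q i`, `i ∈ s`, contained in `A`, counted with multiplicity. -/
noncomputable def cellCount (Q : I → Set E) (s : Set I) (A : Set E) : ℕ∞ :=
  {i ∈ s | Q i ⊆ A}.encard

/-- The cells `Q i`, `i ∈ s`, that contain at least `h` cells. -/
def heavyCells (Q : I → Set E) (s : Set I) (h : ℕ∞) : Set (Set E) :=
  {A ∈ Q '' s | h ≤ cellCount Q s A}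

/-- The heavy cells that contain no smaller heavy cell; the sets along which the family is cut. -/
def minimalHeavyCells (Q : I → Set E) (s : Set I) (h : ℕ∞) : Set (Set E) :=
  {A | Minimal (· ∈ heavyCells Q s h) A}

/-- The indices `i` such that `T i` is assigned to a cell containing `A` and meets `A`. -/
def crossing (T Q : I → Set E) (s : Set I) (A : Set E) : Set I :=
  {i ∈ s | A ⊆ Q i ∧ (T i ∩ A).Nonempty}

/-- The indices of the sets that cross some minimal heavy cell. -/
def crossingIndices (T Q : I → Set E) (s : Set I) (h : ℕ∞) : Set I :=
  ⋃ A : minimalHeavyCells Q s h, crossing T Q s A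

/-- Each set `T i`, `i ∈ s`, is nonempty and assigned to a cell `Q i` containing it, the cells form
a laminar family, and for each cell `Q j` the sets crossing it are stabbed by `N` points. -/
structure IsLaminarHull (T Q : I → Set E) (s : Set I) (N : ℕ∞) : Prop where
  nonempty : ∀ i ∈ s, (T i).Nonempty
  subset : ∀ i ∈ s, T i ⊆ Q i
  laminar : ∀ i ∈ s, ∀ j ∈ s, (Q i ∩ Q j).Nonempty → Q i ⊆ Q j ∨ Q j ⊆ Q i
  stabbed : ∀ j ∈ s, ∃ S : Set E, S.encard ≤ N ∧ ∀ i ∈ crossing T Q s (Q j), ∃ p ∈ S, p ∈ T i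

variable {T Q : I → Set E} {s t : Set I} {N h : ℕ∞} {A B C : Set E}

lemma cellCount_mono (hst : s ⊆ t) (A : Set E) : cellCount Q s A ≤ cellCount Q t A :=
  Set.encard_le_encard fun _ hi => ⟨hst hi.1, hi.2⟩

lemma IsLaminarHull.mono (H : IsLaminarHull T Q t N) (hst : s ⊆ t) : IsLaminarHull T Q s N where
  nonempty i hi := H.nonempty i (hst hi)
  subset i hi := H.subset i (hst hi)
  laminar i hi j hj := H.laminar i (hst hi) j (hst hj)
  stabbed j hj :=
    let ⟨S, hS, hstab⟩ := H.stabbed j (hst hj)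
    ⟨S, hS, fun i hi => hstab i ⟨hst hi.1, hi.2⟩⟩

lemma exists_minimalHeavyCells_subset {i : I} (hi : i ∈ s) (hheavy : h ≤ cellCount Q s (Q i))
    (hfin : cellCount Q s (Q i) ≠ ⊤) : ∃ A ∈ minimalHeavyCells Q s h, A ⊆ Q i := by
  have hfinite : {A ∈ heavyCells Q s h | A ⊆ Q i}.Finite := by
    refine ((Set.encard_ne_top_iff.1 hfin).image Q).subset ?_
    rintro _ ⟨⟨⟨k, hk, rfl⟩, -⟩, hki⟩
    exact ⟨k, ⟨hk, hki⟩, rfl⟩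
  obtain ⟨A, hAi, hA⟩ := hfinite.exists_le_minimal ⟨⟨⟨i, hi, rfl⟩, hheavy⟩, subset_rfl⟩
  exact ⟨A, ⟨hA.prop.1, fun B hB hBA => hA.le_of_le ⟨hB, hBA.trans hAi⟩ hBA⟩, hAi⟩

namespace IsLaminarHull

lemma cellCount_add_le (H : IsLaminarHull T Q s N) (hAB : Disjoint A B) (hA : A ⊆ C)
    (hB : B ⊆ C) : cellCount Q s A + cellCount Q s B ≤ cellCount Q s C := by
  have hdisj : Disjoint {i ∈ s | Q i ⊆ A} {i ∈ s | Q i ⊆ B} := by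
    refine Set.disjoint_left.2 fun i hi hi' => ?_
    obtain ⟨y, hy⟩ := H.nonempty i hi.1
    exact Set.disjoint_left.1 hAB (hi.2 (H.subset i hi.1 hy)) (hi'.2 (H.subset i hi.1 hy))
  rw [cellCount, cellCount, ← Set.encard_union_eq hdisj]
  exact Set.encard_le_encard (Set.union_subset (fun i hi => ⟨hi.1, hi.2.trans hA⟩)
    fun i hi => ⟨hi.1, hi.2.trans hB⟩)

lemma minimalHeavyCells_unique (H : IsLaminarHull T Q s N) (hC : cellCount Q s C < 2 * h)
    (hA : A ∈ minimalHeavyCells Q s h) (hB : B ∈ minimalHeavyCells Q s h)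
    (hAC : A ⊆ C) (hBC : B ⊆ C) : A = B := by
  obtain ⟨⟨i, hi, rfl⟩, hAheavy⟩ := hA.prop
  obtain ⟨⟨j, hj, rfl⟩, hBheavy⟩ := hB.prop
  by_cases hdisj : Disjoint (Q i) (Q j)
  · refine absurd hC (not_lt.2 ?_)
    rw [two_mul]
    exact (add_le_add hAheavy hBheavy).trans (H.cellCount_add_le hdisj hAC hBC)
  · rcases H.laminar i hi j hj (Set.not_disjoint_iff_nonempty_inter.1 hdisj) with hij | hji
    · exact hB.eq_of_subset hA.prop hij
    · exact (hA.eq_of_subset hB.prop hji).symm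

lemma hasStabbedCover_crossing (H : IsLaminarHull T Q s N)
    (hcount : ∀ i ∈ s, cellCount Q s (Q i) < 2 * h) :
    HasStabbedCover T (crossingIndices T Q s h) N := by
  refine HasStabbedCover.iUnion_of_disjoint ?_ ?_
  · rintro ⟨A, hA⟩
    obtain ⟨⟨j, hj, rfl⟩, -⟩ := hA.prop
    obtain ⟨S, hS, hstab⟩ := H.stabbed j hj
    exact (HasStabbedCover.of_stabbing_set hstab).mono hS
  · rintro ⟨A, hA⟩ ⟨B, hB⟩ hAB i ⟨hi, hAi, -⟩ j ⟨hj, hBj, -⟩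
    refine Set.disjoint_left.2 fun x hxi hxj => hAB (Subtype.ext ?_)
    rcases H.laminar i hi j hj ⟨x, H.subset i hi hxi, H.subset j hj hxj⟩ with hij | hji
    · exact H.minimalHeavyCells_unique (hcount j hj) hA hB (hAi.trans hij) hBj
    · exact H.minimalHeavyCells_unique (hcount i hi) hA hB hAi (hBj.trans hji)

end IsLaminarHull

/-- The indices of the sets that cross no minimal heavy cell and are assigned to a cell inside
one. -/
def innerIndices (T Q : I → Set E) (s : Set I) (h : ℕ∞) : Set I :=
  {i ∈ s | ∃ A ∈ minimalHeavyCells Q s h, Q i ⊆ A} \ crossingIndices T Q s h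

/-- The indices of the sets that cross no minimal heavy cell and are assigned to a cell inside
none. -/
def outerIndices (T Q : I → Set E) (s : Set I) (h : ℕ∞) : Set I :=
  {i ∈ s | ¬∃ A ∈ minimalHeavyCells Q s h, Q i ⊆ A} \ crossingIndices T Q s h

lemma innerIndices_subset : innerIndices T Q s h ⊆ s := fun _ hi => hi.1.1

lemma outerIndices_subset : outerIndices T Q s h ⊆ s := fun _ hi => hi.1.1

lemma crossing_union_inner_union_outer :
    crossingIndices T Q s h ∪ (innerIndices T Q s h ∪ outerIndices T Q s h) = s := by
  rw [innerIndices, outerIndices, ← Set.union_sdiff_distrib, Set.union_sdiff_self]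
  have hsplit : {i ∈ s | ∃ A ∈ minimalHeavyCells Q s h, Q i ⊆ A} ∪
      {i ∈ s | ¬∃ A ∈ minimalHeavyCells Q s h, Q i ⊆ A} = s := by
    ext i
    exact ⟨fun hi => hi.elim And.left And.left, fun hi => (em _).imp (⟨hi, ·⟩) (⟨hi, ·⟩)⟩
  rw [hsplit, Set.union_eq_right]
  exact Set.iUnion_subset fun _ _ hi => hi.1

lemma cellCount_outer_lt {i : I} (hi : i ∈ outerIndices T Q s h)
    (hcount : cellCount Q s (Q i) < 2 * h) : cellCount Q (outerIndices T Q s h) (Q i) < h := by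
  by_contra! hheavy
  obtain ⟨A, hA, hAi⟩ := exists_minimalHeavyCells_subset (outerIndices_subset hi)
    (hheavy.trans (cellCount_mono outerIndices_subset _)) hcount.ne_top
  have hdisj : Disjoint {k ∈ outerIndices T Q s h | Q k ⊆ Q i} {k ∈ s | Q k ⊆ A} :=
    Set.disjoint_left.2 fun k hk hk' => hk.1.1.2 ⟨A, hA, hk'.2⟩
  refine absurd hcount (not_lt.2 ?_)
  calc 2 * h ≤ cellCount Q (outerIndices T Q s h) (Q i) + cellCount Q s A := by
        rw [two_mul]; exact add_le_add hheavy hA.prop.2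
    _ = ({k ∈ outerIndices T Q s h | Q k ⊆ Q i} ∪ {k ∈ s | Q k ⊆ A}).encard :=
        (Set.encard_union_eq hdisj).symm
    _ ≤ cellCount Q s (Q i) := Set.encard_le_encard <| Set.union_subset
        (fun k hk => ⟨outerIndices_subset hk.1, hk.2⟩) fun k hk => ⟨hk.1, hk.2.trans hAi⟩

namespace IsLaminarHull

lemma disjoint_of_mem_inner_of_mem_outer (H : IsLaminarHull T Q s N) {i j : I}
    (hi : i ∈ innerIndices T Q s h) (hj : j ∈ outerIndices T Q s h) : Disjoint (T i) (T j) := by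
  obtain ⟨⟨hi, A, hA, hiA⟩, -⟩ := hi
  obtain ⟨⟨hj, hjout⟩, hjcross⟩ := hj
  obtain ⟨⟨k, hk, rfl⟩, -⟩ := hA.prop
  refine Set.disjoint_left.2 fun x hxi hxj => ?_
  have hxk : x ∈ Q k := hiA (H.subset i hi hxi)
  rcases H.laminar j hj k hk ⟨x, H.subset j hj hxj, hxk⟩ with hjk | hkj
  · exact hjout ⟨Q k, hA, hjk⟩
  · exact hjcross (Set.mem_iUnion.2 ⟨⟨Q k, hA⟩, hj, hkj, x, hxj, hxk⟩)

lemma cellCount_inner_lt (H : IsLaminarHull T Q s N) {i : I}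
    (hi : i ∈ innerIndices T Q s h) : cellCount Q (innerIndices T Q s h) (Q i) < h := by
  obtain ⟨⟨his, A, hA, hiA⟩, hcross⟩ := hi
  by_contra! hheavy
  have hAi : A ⊆ Q i :=
    hA.le_of_le ⟨⟨i, his, rfl⟩, hheavy.trans (cellCount_mono innerIndices_subset _)⟩ hiA
  obtain ⟨y, hy⟩ := H.nonempty i his
  exact hcross (Set.mem_iUnion.2 ⟨⟨A, hA⟩, his, hAi, y, hy, hiA (H.subset i his hy)⟩)

theorem hasStabbedCover (H : IsLaminarHull T Q s N) (m : ℕ)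
    (hcount : ∀ i ∈ s, cellCount Q s (Q i) < 2 ^ m) : HasStabbedCover T s (N * m) := by
  induction m generalizing s with
  | zero =>
    have hs : s = ∅ := by
      refine Set.eq_empty_of_forall_notMem fun i hi => ?_
      have hempty : {k ∈ s | Q k ⊆ Q i} = ∅ := by
        simpa [cellCount, Order.lt_one_iff] using hcount i hi
      exact Set.notMem_empty i (hempty ▸ ⟨hi, subset_rfl⟩)
    exact hs ▸ HasStabbedCover.empty
  | succ m ih =>
    replace hcount : ∀ i ∈ s, cellCount Q s (Q i) < 2 * 2 ^ m := by
      simpa only [pow_succ'] using hcount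
    have hinner : HasStabbedCover T (innerIndices T Q s (2 ^ m)) (N * m) :=
      ih (H.mono innerIndices_subset) fun i => H.cellCount_inner_lt
    have houter : HasStabbedCover T (outerIndices T Q s (2 ^ m)) (N * m) :=
      ih (H.mono outerIndices_subset) fun i hi =>
        cellCount_outer_lt hi (hcount i (outerIndices_subset hi))
    have hunion := (H.hasStabbedCover_crossing hcount).union (hinner.union_of_disjoint houter
      fun i hi j hj => H.disjoint_of_mem_inner_of_mem_outer hi hj)
    rw [crossing_union_inner_union_outer] at hunion
    exact hunion.mono (by push_cast; rw [mul_add, mul_one, add_comm])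

end IsLaminarHull

end Halving

section FatConvex

variable {E : Type*} [NormedAddCommGroup E] [NormedSpace ℝ E] {κ : ℝ} {T : Set E} {z q : E}
  {d s : ℝ}

/-- The convex set `T` lies in the ball of radius `d` about `z` and contains the concentric ball of
radius `κ * d`: a fat convex set with its size and centre. -/
structure IsFatAround (κ : ℝ) (T : Set E) (z : E) (d : ℝ) : Prop where
  pos : 0 < d
  convex : Convex ℝ T
  closedBall_subset : closedBall z (κ * d) ⊆ T
  subset_closedBall : T ⊆ closedBall z d

lemma IsFatAround.center_mem (hT : IsFatAround κ T z d) (hκ : 0 ≤ κ) : z ∈ T :=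
  hT.closedBall_subset (mem_closedBall_self (mul_nonneg hκ hT.pos.le))

lemma IsFatAround.closedBall_lineMap_subset (hT : IsFatAround κ T z d) (hq : q ∈ T) (hs0 : 0 < s)
    (hs1 : s ≤ 1) : closedBall (AffineMap.lineMap q z s) (s * (κ * d)) ⊆ T := by
  intro p hp
  have dist_lineMap_left_const (a b : E) :
      dist (AffineMap.lineMap q a s) (AffineMap.lineMap q b s) = s * dist a b := by
    rw [AffineMap.lineMap_apply_module', AffineMap.lineMap_apply_module', dist_add_right,
      dist_smul₀, dist_sub_right, Real.norm_of_nonneg hs0.le]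
  have hz' : AffineMap.lineMap q p s⁻¹ ∈ closedBall z (κ * d) := by
    have hp' : p = AffineMap.lineMap q (AffineMap.lineMap q p s⁻¹) s := by
      rw [AffineMap.lineMap_lineMap_right, mul_inv_cancel₀ hs0.ne', AffineMap.lineMap_apply_one]
    rw [hp', mem_closedBall, dist_lineMap_left_const] at hp
    exact le_of_mul_le_mul_left hp hs0
  have hmem := hT.convex.lineMap_mem hq (hT.closedBall_subset hz') ⟨hs0.le, hs1⟩
  rwa [AffineMap.lineMap_lineMap_right, mul_inv_cancel₀ hs0.ne', AffineMap.lineMap_apply_one]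
    at hmem

lemma exists_net_closedBall [ProperSpace E] (M : ℝ) {ε : ℝ} (hε : 0 < ε) :
    ∃ N : ℕ, ∀ (z₀ : E) (r : ℝ), 0 < r → ∃ S : Set E, S.encard ≤ N ∧
      ∀ p ∈ closedBall z₀ (M * r), ∃ q ∈ S, dist q p ≤ ε * r := by
  obtain ⟨t, -, htfin, ht⟩ := (isCompact_closedBall (0 : E) M).finite_cover_balls hε
  refine ⟨t.ncard, fun z₀ r hr => ⟨(fun y => z₀ + r • y) '' t, ?_, fun p hp => ?_⟩⟩
  · rw [htfin.cast_ncard_eq]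
    exact Set.encard_image_le _ _
  · have hp' : r⁻¹ • (p - z₀) ∈ closedBall (0 : E) M := by
      rw [mem_closedBall_zero_iff, norm_smul, norm_inv, Real.norm_of_nonneg hr.le,
        inv_mul_le_iff₀ hr, ← dist_eq_norm, mul_comm]
      exact hp
    obtain ⟨y, hy, hyp⟩ := Set.mem_iUnion₂.1 (ht hp')
    refine ⟨z₀ + r • y, ⟨y, hy, rfl⟩, ?_⟩
    calc dist (z₀ + r • y) p = dist (z₀ + r • y) (z₀ + r • r⁻¹ • (p - z₀)) := by
          rw [smul_inv_smul₀ hr.ne', add_sub_cancel]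
      _ = r * dist (r⁻¹ • (p - z₀)) y := by
          rw [dist_add_left, dist_smul₀, Real.norm_of_nonneg hr.le, dist_comm]
      _ ≤ ε * r := by rw [mul_comm]; exact mul_le_mul_of_nonneg_right hyp.le hr.le

lemma exists_stabbing_set [ProperSpace E] (M : ℝ) {κ c : ℝ} (hκ : 0 < κ) (hc : 0 < c) :
    ∃ N : ℕ, ∀ (z₀ : E) (r : ℝ), 0 < r → ∃ S : Set E, S.encard ≤ N ∧
      ∀ (T : Set E) (z : E) (d : ℝ), IsFatAround κ T z d → c * r ≤ d →
        (T ∩ closedBall z₀ (M * r)).Nonempty → ∃ p ∈ S, p ∈ T := by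
  obtain ⟨N, hN⟩ := exists_net_closedBall (E := E) (M + c) (mul_pos hc hκ)
  refine ⟨N, fun z₀ r hr => ?_⟩
  obtain ⟨S, hS, hnet⟩ := hN z₀ r hr
  refine ⟨S, hS, fun T z d hT hrd ⟨q, hqT, hq⟩ => ?_⟩
  have hsd : c * r / d * d = c * r := div_mul_cancel₀ _ hT.pos.ne'
  have hs0 : 0 < c * r / d := div_pos (mul_pos hc hr) hT.pos
  have hcenter : AffineMap.lineMap q z (c * r / d) ∈ closedBall z₀ ((M + c) * r) := by
    have hqz : dist q z ≤ d := hT.subset_closedBall hqT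
    calc dist (AffineMap.lineMap q z (c * r / d)) z₀
        ≤ dist (AffineMap.lineMap q z (c * r / d)) q + dist q z₀ := dist_triangle _ _ _
      _ ≤ c * r / d * d + M * r := by
          rw [dist_lineMap_left, Real.norm_of_nonneg hs0.le]
          exact add_le_add (mul_le_mul_of_nonneg_left hqz hs0.le) hq
      _ = (M + c) * r := by rw [hsd]; ring
  obtain ⟨p, hpS, hp⟩ := hnet _ hcenter
  refine ⟨p, hpS, hT.closedBall_lineMap_subset hqT hs0 ((div_le_one hT.pos).2 hrd) ?_⟩
  rw [mem_closedBall]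
  calc dist p (AffineMap.lineMap q z (c * r / d)) ≤ c * κ * r := hp
    _ = c * r / d * (κ * d) := by rw [mul_left_comm, hsd]; ring

end FatConvex

section GridCells

variable {ι : Type*} {o : ι → ℝ} {r R d : ℝ} {x y z : EuclideanSpace ℝ ι}

/-- The half-open cube of side `r` that contains `x`, in the cubical grid of mesh `r` with
origin `o`. -/
def gridCell (o : ι → ℝ) (r : ℝ) (x : EuclideanSpace ℝ ι) : Set (EuclideanSpace ℝ ι) :=
  {y | ∀ c, ⌊(y c - o c) / r⌋ = ⌊(x c - o c) / r⌋}

lemma abs_sub_lt_of_mem_gridCell (hr : 0 < r) (hy : y ∈ gridCell o r x)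
    (hz : z ∈ gridCell o r x) (c : ι) : |y c - z c| < r := by
  have h := Int.abs_sub_lt_one_of_floor_eq_floor ((hy c).trans (hz c).symm)
  rw [← sub_div, abs_div, abs_of_pos hr, div_lt_one hr] at h
  simpa using h

lemma dist_le_of_mem_gridCell [Fintype ι] (hr : 0 < r) (hy : y ∈ gridCell o r x)
    (hz : z ∈ gridCell o r x) : dist y z ≤ √(Fintype.card ι) * r := by
  have hcoord (c : ι) : dist (y c) (z c) ^ 2 ≤ r ^ 2 :=
    pow_le_pow_left₀ dist_nonneg (abs_sub_lt_of_mem_gridCell hr hy hz c).le 2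
  rw [EuclideanSpace.dist_eq, ← Real.sqrt_sq hr.le, ← Real.sqrt_mul (Nat.cast_nonneg _)]
  refine Real.sqrt_le_sqrt ((Finset.sum_le_sum fun c _ => hcoord c).trans_eq ?_)
  simp

lemma lt_of_closedBall_subset_gridCell [Fintype ι] [Nonempty ι] {ρ : ℝ} (hρ : 0 ≤ ρ) (hr : 0 < r)
    (h : closedBall z ρ ⊆ gridCell o r x) : ρ < r := by
  classical
  obtain ⟨c⟩ := ‹Nonempty ι›
  have hmem : z + EuclideanSpace.single c ρ ∈ closedBall z ρ := by
    simp [abs_of_nonneg hρ]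
  have hlt := abs_sub_lt_of_mem_gridCell hr (h hmem) (h (mem_closedBall_self hρ)) c
  simpa [abs_of_nonneg hρ] using hlt

lemma gridCell_subset_of_le {k l : ℕ} (hkl : k ≤ l) (hx : z ∈ gridCell o (R / 2 ^ k) x)
    (hy : z ∈ gridCell o (R / 2 ^ l) y) : gridCell o (R / 2 ^ l) y ⊆ gridCell o (R / 2 ^ k) x := by
  obtain ⟨m, rfl⟩ := Nat.exists_eq_add_of_le hkl
  have floor_coarse (t : ℝ) : ⌊t / (R / 2 ^ k)⌋ = ⌊t / (R / 2 ^ (k + m))⌋ / ((2 ^ m : ℕ) : ℤ) := by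
    rw [← Int.floor_div_natCast]
    congr 1
    push_cast
    rw [pow_add]
    rcases eq_or_ne R 0 with rfl | hR
    · simp
    · field_simp
  intro p hp c
  rw [← hx c, floor_coarse, floor_coarse, hp c, hy c]

lemma gridCell_subset_or_subset (k l : ℕ)
    (h : (gridCell o (R / 2 ^ k) x ∩ gridCell o (R / 2 ^ l) y).Nonempty) :
    gridCell o (R / 2 ^ k) x ⊆ gridCell o (R / 2 ^ l) y ∨
      gridCell o (R / 2 ^ l) y ⊆ gridCell o (R / 2 ^ k) x := by
  obtain ⟨z, hzx, hzy⟩ := h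
  rcases le_total k l with hkl | hlk
  · exact Or.inr (gridCell_subset_of_le hkl hzx hzy)
  · exact Or.inl (gridCell_subset_of_le hlk hzy hzx)

lemma exists_dyadic_level {a : ℝ} (ha : 0 < a) (haR : a ≤ R) :
    ∃ k : ℕ, a ≤ R / 2 ^ k ∧ R / 2 ^ k < 2 * a := by
  obtain ⟨k, hk, hk'⟩ := exists_nat_pow_near ((one_le_div ha).2 haR) one_lt_two
  rw [le_div_iff₀ ha] at hk
  rw [div_lt_iff₀ ha, pow_succ] at hk'
  refine ⟨k, ?_, ?_⟩
  · rw [le_div_iff₀ (by positivity)]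
    linarith
  · rw [div_lt_iff₀ (by positivity)]
    linarith

lemma exists_grid_point_near {a t u : ℝ} (hr : 0 < r) (htu : |u - t| ≤ d)
    (hne : ⌊(u - a) / r⌋ ≠ ⌊(t - a) / r⌋) : ∃ m : ℤ, |m * r + a - t| ≤ d := by
  rw [abs_le] at htu
  rcases lt_or_gt_of_ne hne with hlt | hlt
  · refine ⟨⌊(t - a) / r⌋, ?_⟩
    have hle := (le_div_iff₀ hr).1 (Int.floor_le ((t - a) / r))
    have hgt := (div_lt_iff₀ hr).1 (Int.floor_lt.1 hlt)
    rw [abs_le]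
    constructor <;> linarith
  · refine ⟨⌊(u - a) / r⌋, ?_⟩
    have hle := (le_div_iff₀ hr).1 (Int.floor_le ((u - a) / r))
    have hgt := (div_lt_iff₀ hr).1 (Int.floor_lt.1 hlt)
    rw [abs_le]
    constructor <;> linarith

lemma one_le_abs_three_mul_sub_two_pow (m : ℤ) (k : ℕ) : 1 ≤ |3 * m - 2 ^ k| := by
  refine Int.one_le_abs (sub_ne_zero.2 fun h => ?_)
  have h3 : (3 : ℤ) ∣ 2 := Int.prime_three.dvd_of_dvd_pow ⟨m, h.symm⟩
  norm_num at h3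

lemma third_le_abs_grid_sub_shifted_grid {k : ℕ} (hr : 0 < R / 2 ^ k) (m m' : ℤ) :
    R / 2 ^ k / 3 ≤ |m * (R / 2 ^ k) - (m' * (R / 2 ^ k) + R / 3)| := by
  have hone : (1 : ℝ) ≤ |3 * ((m - m' : ℤ) : ℝ) - 2 ^ k| := by
    exact_mod_cast one_le_abs_three_mul_sub_two_pow (m - m') k
  calc R / 2 ^ k / 3 ≤ R / 2 ^ k / 3 * |3 * ((m - m' : ℤ) : ℝ) - 2 ^ k| :=
        le_mul_of_one_le_right (by positivity) hone
    _ = |R / 2 ^ k / 3 * (3 * ((m - m' : ℤ) : ℝ) - 2 ^ k)| := by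
        rw [abs_mul, abs_of_pos (by positivity : 0 < R / 2 ^ k / 3)]
    _ = |m * (R / 2 ^ k) - (m' * (R / 2 ^ k) + R / 3)| := by
        congr 1
        push_cast
        field_simp
        ring

/-- The origins of the shifted grids: each coordinate is `0` or `R / 3`. -/
noncomputable def shiftedOrigin (R : ℝ) (b : ι → Bool) (c : ι) : ℝ :=
  if b c then R / 3 else 0

lemma exists_shift_floor_eq {k : ℕ} (hd : 0 < d) (hR : 7 * d ≤ R / 2 ^ k) (t : ℝ) :
    ∃ b : Bool, ∀ u, |u - t| ≤ d →
      ⌊(u - if b then R / 3 else 0) / (R / 2 ^ k)⌋ =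
        ⌊(t - if b then R / 3 else 0) / (R / 2 ^ k)⌋ := by
  have hr : 0 < R / 2 ^ k := by linarith
  by_contra! hcon
  obtain ⟨u, hu, hne⟩ := hcon false
  obtain ⟨u', hu', hne'⟩ := hcon true
  obtain ⟨m, hm⟩ := exists_grid_point_near hr hu hne
  obtain ⟨m', hm'⟩ := exists_grid_point_near hr hu' hne'
  have hfar := third_le_abs_grid_sub_shifted_grid hr m m'
  simp only [Bool.false_eq_true, if_false, if_true, add_zero] at hm hm'
  have hnear := abs_sub_le (m * (R / 2 ^ k)) t (m' * (R / 2 ^ k) + R / 3)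
  rw [abs_sub_comm t] at hnear
  linarith

lemma exists_closedBall_subset_gridCell [Fintype ι] {k : ℕ} (hd : 0 < d) (hR : 7 * d ≤ R / 2 ^ k)
    (z : EuclideanSpace ℝ ι) :
    ∃ b : ι → Bool, closedBall z d ⊆ gridCell (shiftedOrigin R b) (R / 2 ^ k) z := by
  choose b hb using fun c => exists_shift_floor_eq hd hR (z c)
  refine ⟨b, fun y hy c => hb c (y c) ?_⟩
  rw [mem_closedBall, dist_eq_norm] at hy
  exact (PiLp.norm_apply_le (y - z) c).trans hy

end GridCells

section FatFamilies

variable {ι : Type*} [Fintype ι] [Nonempty ι] {κ : ℝ}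

lemma exists_isLaminarHull_gridCell (hκ : 0 < κ) :
    ∃ N : ℕ, ∀ {I : Type*} {T : I → Set (EuclideanSpace ℝ ι)} {z : I → EuclideanSpace ℝ ι}
      {d : I → ℝ} {k : I → ℕ} {s : Set I} {R : ℝ} {o : ι → ℝ},
      (∀ i ∈ s, IsFatAround κ (T i) (z i) (d i)) →
      (∀ i ∈ s, T i ⊆ gridCell o (R / 2 ^ k i) (z i)) →
      (∀ i ∈ s, 0 < R / 2 ^ k i) → (∀ i ∈ s, R / 2 ^ k i < 14 * d i) →
      IsLaminarHull T (fun i => gridCell o (R / 2 ^ k i) (z i)) s N := by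
  obtain ⟨N, hN⟩ := exists_stabbing_set (E := EuclideanSpace ℝ ι) √(Fintype.card ι) hκ
    (by positivity : 0 < κ / 196)
  refine ⟨N, fun {I T z d k s R o} hfat hsub hpos hlt => ?_⟩
  have center_mem (i : I) (hi : i ∈ s) : z i ∈ T i := (hfat i hi).center_mem hκ.le
  refine ⟨fun i hi => ⟨z i, center_mem i hi⟩, hsub,
    fun i _ j _ => gridCell_subset_or_subset (k i) (k j), fun j hj => ?_⟩
  obtain ⟨S, hS, hstab⟩ := hN (z j) _ (hpos j hj)
  refine ⟨S, hS, ?_⟩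
  rintro i ⟨hi, hji, x, hxi, hxj⟩
  have hsize : κ * d j < R / 2 ^ k i :=
    lt_of_closedBall_subset_gridCell (mul_nonneg hκ.le (hfat j hj).pos.le) (hpos i hi)
      ((hfat j hj).closedBall_subset.trans ((hsub j hj).trans hji))
  refine hstab (T i) (z i) (d i) (hfat i hi) ?_ ⟨x, hxi, ?_⟩
  · calc κ / 196 * (R / 2 ^ k j) ≤ κ / 196 * (14 * d j) := by gcongr; exact (hlt j hj).le
      _ = κ * d j / 14 := by ring
      _ ≤ d i := by linarith [hlt i hi]
  · exact dist_le_of_mem_gridCell (hpos j hj) hxj (hsub j hj (center_mem j hj))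

lemma exists_hasStabbedCover (hκ : 0 < κ) :
    ∃ N : ℕ, ∀ {I : Type*} [Fintype I] [Nonempty I] {T : I → Set (EuclideanSpace ℝ ι)},
      (∀ i, ∃ z d, IsFatAround κ (T i) z d) →
      HasStabbedCover T Set.univ
        ((2 ^ Fintype.card ι * (N * (Nat.log 2 (Fintype.card I) + 1)) : ℕ) : ℕ∞) := by
  classical
  obtain ⟨N, hN⟩ := exists_isLaminarHull_gridCell (ι := ι) hκ
  refine ⟨N, fun {I _ _ T} hfat => ?_⟩
  choose z d hfat using hfat
  obtain ⟨i₀, hi₀⟩ := Finite.exists_max d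
  have hlevel (i : I) := exists_dyadic_level (R := 7 * d i₀)
    (mul_pos (by norm_num : (0 : ℝ) < 7) (hfat i).pos)
    (mul_le_mul_of_nonneg_left (hi₀ i) (by norm_num))
  choose k hk_le hk_lt using hlevel
  choose b hb using fun i => exists_closedBall_subset_gridCell (hfat i).pos (hk_le i) (z i)
  have hcover (σ : ι → Bool) : HasStabbedCover T {i | b i = σ}
      (N * (Nat.log 2 (Fintype.card I) + 1 : ℕ)) := by
    refine (hN (o := shiftedOrigin (7 * d i₀) σ) (k := k) (fun i _ => hfat i) (fun i hi => ?_)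
      (fun i _ => ?_) fun i _ => (hk_lt i).trans_eq (by ring)).hasStabbedCover _ fun i _ => ?_
    · exact (hfat i).subset_closedBall.trans (hi ▸ hb i)
    · linarith [hk_le i, (hfat i).pos]
    · calc cellCount _ _ _ ≤ (Set.univ : Set I).encard := Set.encard_le_encard (Set.subset_univ _)
        _ < 2 ^ (Nat.log 2 (Fintype.card I) + 1) := by
          rw [Set.encard_univ, ENat.card_eq_coe_fintype_card]
          exact_mod_cast Nat.lt_pow_succ_log_self one_lt_two _
  have hunion := HasStabbedCover.iUnion hcover
  have huniv : ⋃ σ, {i | b i = σ} = Set.univ := by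
    ext i
    simp
  rw [huniv] at hunion
  exact hunion.mono (by simp)

end FatFamilies

section FatTriangles

lemma sin_le_sin_of_mem_Icc_pi_sub {α θ : ℝ} (hα : 0 ≤ α) (hθ : θ ∈ Set.Icc α (Real.pi - α)) :
    Real.sin α ≤ Real.sin θ := by
  have hle : α ≤ Real.pi - α := hθ.1.trans hθ.2
  have hmin := strictConcaveOn_sin_Icc.concaveOn.min_le_of_mem_Icc
    ⟨hα, by linarith⟩ ⟨by linarith, sub_le_self _ hα⟩ hθ
  rwa [Real.sin_pi_sub, min_self] at hmin

lemma mul_dist_le_dist_of_le_sin_angle {V P : Type*} [NormedAddCommGroup V]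
    [InnerProductSpace ℝ V] [MetricSpace P] [NormedAddTorsor V P] {σ : ℝ} {u v w : P}
    (h : σ ≤ Real.sin (EuclideanGeometry.angle u w v)) : σ * dist u w ≤ dist u v := by
  calc σ * dist u w ≤ Real.sin (EuclideanGeometry.angle u w v) * dist u w := by gcongr
    _ = Real.sin (EuclideanGeometry.angle w v u) * dist v u :=
        (EuclideanGeometry.law_sin w v u).symm
    _ ≤ dist u v := by
        rw [dist_comm u v]
        exact mul_le_of_le_one_left dist_nonneg (Real.sin_le_one _)

lemma convexHull_subset_closedBall_centroid {E : Type*} [NormedAddCommGroup E] [NormedSpace ℝ E]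
    {u v w : E} {d : ℝ} (huv : dist u v ≤ d) (huw : dist u w ≤ d) :
    convexHull ℝ {u, v, w} ⊆ closedBall ((1 / 3 : ℝ) • (u + v + w)) d := by
  have dist_centroid (x y z : E) :
      3 * dist x ((1 / 3 : ℝ) • (x + y + z)) ≤ dist x y + dist x z := by
    have hsum : (3 : ℝ) • (x - (1 / 3 : ℝ) • (x + y + z)) = x - y + (x - z) := by module
    calc 3 * dist x ((1 / 3 : ℝ) • (x + y + z))
        = ‖(3 : ℝ) • (x - (1 / 3 : ℝ) • (x + y + z))‖ := by
          rw [norm_smul, dist_eq_norm, Real.norm_of_nonneg zero_le_three]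
      _ ≤ dist x y + dist x z := by
          rw [hsum, dist_eq_norm, dist_eq_norm]
          exact norm_add_le _ _
  have hvw := dist_triangle v u w
  have hd : 0 ≤ d := dist_nonneg.trans huv
  rw [dist_comm v u] at hvw
  refine convexHull_min ?_ (convex_closedBall _ _)
  rintro p (rfl | rfl | rfl)
  · have hp := dist_centroid p v w
    rw [mem_closedBall]
    linarith
  · have hp := dist_centroid p u w
    rw [add_comm p u, dist_comm p u] at hp
    rw [mem_closedBall]
    linarith
  · have hp := dist_centroid p u v
    rw [add_assoc, add_comm p, dist_comm p u, dist_comm p v] at hp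
    rw [mem_closedBall]
    linarith

/-- The determinant of two plane vectors, which measures twice the signed area of a triangle. -/
def planeDet (p q : EuclideanSpace ℝ (Fin 2)) : ℝ :=
  p 0 * q 1 - p 1 * q 0

variable {u v w p q : EuclideanSpace ℝ (Fin 2)} {ρ ℓ : ℝ}

lemma abs_planeDet_eq_sin_angle_mul :
    |planeDet p q| = Real.sin (InnerProductGeometry.angle p q) * (‖p‖ * ‖q‖) := by
  rw [InnerProductGeometry.sin_angle_mul_norm_mul_norm, ← Real.sqrt_sq_eq_abs]
  congr 1
  simp only [planeDet, EuclideanSpace.inner_eq_star_dotProduct, dotProduct, Fin.sum_univ_two,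
    Pi.star_apply, star_trivial]
  ring

lemma abs_planeDet_le : |planeDet p q| ≤ ‖p‖ * ‖q‖ := by
  rw [abs_planeDet_eq_sin_angle_mul]
  exact mul_le_of_le_one_left (by positivity) (Real.sin_le_one _)

-- The barycentric coordinates of `p` are the ratios of signed areas.
lemma mem_convexHull_of_planeDet_div_nonneg (hD : planeDet (v - u) (w - u) ≠ 0)
    (hu : 0 ≤ planeDet (v - p) (w - p) / planeDet (v - u) (w - u))
    (hv : 0 ≤ planeDet (w - p) (u - p) / planeDet (v - u) (w - u))
    (hw : 0 ≤ planeDet (u - p) (v - p) / planeDet (v - u) (w - u)) :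
    p ∈ convexHull ℝ {u, v, w} := by
  refine mem_convexHull_of_exists_fintype (z := ![u, v, w])
    (w := ![planeDet (v - p) (w - p) / planeDet (v - u) (w - u),
      planeDet (w - p) (u - p) / planeDet (v - u) (w - u),
      planeDet (u - p) (v - p) / planeDet (v - u) (w - u)]) ?_ ?_ ?_ ?_
  · simp [Fin.forall_fin_succ, hu, hv, hw]
  · simp only [Fin.sum_univ_three, Matrix.cons_val]
    rw [← add_div, ← add_div, div_eq_one_iff_eq hD]
    simp only [planeDet, PiLp.sub_apply]
    ring
  · simp [Fin.forall_fin_succ]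
  · ext c
    simp only [Fin.sum_univ_three, Matrix.cons_val, PiLp.add_apply, PiLp.smul_apply, smul_eq_mul]
    rw [div_mul_eq_mul_div, div_mul_eq_mul_div, div_mul_eq_mul_div, ← add_div, ← add_div,
      div_eq_iff hD]
    fin_cases c <;> simp only [planeDet, PiLp.sub_apply, Fin.zero_eta, Fin.mk_one] <;> ring

lemma closedBall_centroid_subset_convexHull (hD : planeDet (v - u) (w - u) ≠ 0)
    (huv : dist u v ≤ ℓ) (hvw : dist v w ≤ ℓ) (hwu : dist w u ≤ ℓ)
    (hρ : ρ * ℓ ≤ |planeDet (v - u) (w - u)| / 3) :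
    closedBall ((1 / 3 : ℝ) • (u + v + w)) ρ ⊆ convexHull ℝ {u, v, w} := by
  intro p hp
  set g : EuclideanSpace ℝ (Fin 2) := (1 / 3 : ℝ) • (u + v + w) with hg
  have hρ0 : 0 ≤ ρ := dist_nonneg.trans hp
  rw [mem_closedBall, dist_eq_norm] at hp
  have coord_nonneg {x y : EuclideanSpace ℝ (Fin 2)} (hxy : dist x y ≤ ℓ) :
      0 ≤ (planeDet (v - u) (w - u) / 3 + planeDet (p - g) (x - y)) / planeDet (v - u) (w - u) := by
    have hle : |planeDet (p - g) (x - y) / planeDet (v - u) (w - u)| ≤ 1 / 3 := by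
      rw [abs_div, div_le_iff₀ (abs_pos.2 hD)]
      calc |planeDet (p - g) (x - y)| ≤ ‖p - g‖ * ‖x - y‖ := abs_planeDet_le
        _ ≤ ρ * ℓ := mul_le_mul hp (dist_eq_norm x y ▸ hxy) (norm_nonneg _) hρ0
        _ ≤ 1 / 3 * |planeDet (v - u) (w - u)| := hρ.trans_eq (by ring)
    rw [add_div, div_right_comm, div_self hD]
    linarith [(abs_le.1 hle).1]
  refine mem_convexHull_of_planeDet_div_nonneg hD
    ((coord_nonneg hvw).trans_eq ?_) ((coord_nonneg hwu).trans_eq ?_)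
    ((coord_nonneg huv).trans_eq ?_)
  all_goals
    congr 1
    simp only [planeDet, hg, PiLp.sub_apply, PiLp.add_apply, PiLp.smul_apply, smul_eq_mul]
    ring

lemma isFatAround_convexHull {σ : ℝ} (hσ : 0 < σ) (huv : u ≠ v)
    (hu : σ ≤ Real.sin (EuclideanGeometry.angle w u v))
    (hv : σ ≤ Real.sin (EuclideanGeometry.angle u v w))
    (hw : σ ≤ Real.sin (EuclideanGeometry.angle u w v)) :
    IsFatAround (σ ^ 2 / 6) (convexHull ℝ {u, v, w}) ((1 / 3 : ℝ) • (u + v + w))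
      (max (dist u v) (dist u w)) := by
  set d := max (dist u v) (dist u w)
  have hd : 0 < d := (dist_pos.2 huv).trans_le (le_max_left _ _)
  have huvd : dist u v ≤ d := le_max_left _ _
  have huwd : dist u w ≤ d := le_max_right _ _
  have hvwd : dist v w ≤ 2 * d := by linarith [dist_triangle_left v w u]
  have huw_le : σ * dist u w ≤ dist u v := mul_dist_le_dist_of_le_sin_angle hw
  have huv_le : σ * dist u v ≤ dist u w := mul_dist_le_dist_of_le_sin_angle hv
  have hprod : σ * d ^ 2 ≤ dist u w * dist u v := by
    rcases max_choice (dist u v) (dist u w) with hmax | hmax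
    · calc σ * d ^ 2 = σ * dist u v * dist u v := by simp only [d, hmax]; ring
        _ ≤ dist u w * dist u v := by gcongr
    · calc σ * d ^ 2 = dist u w * (σ * dist u w) := by simp only [d, hmax]; ring
        _ ≤ dist u w * dist u v := by gcongr
  have harea : σ ^ 2 * d ^ 2 ≤ |planeDet (v - u) (w - u)| := by
    calc σ ^ 2 * d ^ 2 = σ * (σ * d ^ 2) := by ring
      _ ≤ Real.sin (EuclideanGeometry.angle w u v) * (dist u w * dist u v) :=
        mul_le_mul hu hprod (by positivity) (hσ.le.trans hu)
      _ = |planeDet (v - u) (w - u)| := by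
        rw [abs_planeDet_eq_sin_angle_mul, EuclideanGeometry.angle_comm, mul_comm (dist u w),
          dist_comm u v, dist_comm u w, dist_eq_norm, dist_eq_norm]
        rfl
  refine ⟨hd, convex_convexHull ℝ _, ?_, convexHull_subset_closedBall_centroid huvd huwd⟩
  refine closedBall_centroid_subset_convexHull (ℓ := 2 * d)
    (abs_pos.1 ((by positivity : 0 < σ ^ 2 * d ^ 2).trans_le harea)) (by linarith) hvwd
    (by rw [dist_comm]; linarith) ?_
  calc σ ^ 2 / 6 * d * (2 * d) = σ ^ 2 * d ^ 2 / 3 := by ring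
    _ ≤ |planeDet (v - u) (w - u)| / 3 := by gcongr

lemma IsFatTriangle.exists_isFatAround {α : ℝ} (hα : 0 < α) {Δ : Set (EuclideanSpace ℝ (Fin 2))}
    (h : IsFatTriangle α Δ) : ∃ z d, IsFatAround (Real.sin α ^ 2 / 6) Δ z d := by
  obtain ⟨u, v, w, hind, rfl, hu, hv, hw⟩ := h
  have huv : u ≠ v := hind.injective.ne (by decide : (0 : Fin 3) ≠ 1)
  have hsum := EuclideanGeometry.angle_add_angle_add_angle_eq_pi w huv
  rw [EuclideanGeometry.angle_comm v u w, EuclideanGeometry.angle_comm u w v,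
    EuclideanGeometry.angle_comm w v u] at hsum
  refine ⟨_, _, isFatAround_convexHull (Real.sin_pos_of_pos_of_lt_pi hα (by linarith)) huv
    ?_ ?_ ?_⟩
  · exact sin_le_sin_of_mem_Icc_pi_sub hα.le ⟨hu, by linarith⟩
  · exact sin_le_sin_of_mem_Icc_pi_sub hα.le ⟨hv, by linarith⟩
  · rw [EuclideanGeometry.angle_comm]
    exact sin_le_sin_of_mem_Icc_pi_sub hα.le ⟨hw, by linarith⟩

end FatTriangles

theorem stmt6_general {ι : Type*} [Fintype ι] [Nonempty ι] {κ : ℝ} (hκ : 0 < κ) :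
    ∃ c : ℝ, 0 < c ∧
      ∀ (I : Type*) [Fintype I] [DecidableEq I] [Nonempty I]
        (T : I → Set (EuclideanSpace ℝ ι)), (∀ i, ∃ z d, IsFatAround κ (T i) z d) →
        ∃ Part : Finpartition (Finset.univ : Finset I),
          (∀ P ∈ Part.parts, ∃ x, ∀ i ∈ P, x ∈ T i) ∧
          ∀ x, ({P : Finset I | P ∈ Part.parts ∧ ∃ i ∈ P, x ∈ T i}.ncard : ℝ) ≤
            c * (Real.logb 2 (Fintype.card I) + 1) := by
  obtain ⟨N, hN⟩ := exists_hasStabbedCover (ι := ι) hκ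
  refine ⟨2 ^ Fintype.card ι * (N + 1), by positivity, fun I _ _ _ T hfat => ?_⟩
  obtain ⟨Part, hstab, hply⟩ := (hN hfat).exists_finpartition
  refine ⟨Part, hstab, fun x => (Nat.cast_le.2 (hply x)).trans ?_⟩
  have hlog : (Nat.log 2 (Fintype.card I) : ℝ) ≤ Real.logb 2 (Fintype.card I) :=
    Real.natLog_le_logb _ 2
  push_cast
  rw [mul_assoc]
  gcongr
  exact le_add_of_nonneg_right zero_le_one

theorem stmt6 (α : ℝ) (hα0 : 0 < α) (hα : α ≤ Real.pi / 3) :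
    ∃ c : ℝ, 0 < c ∧
      ∀ (n : ℕ), 1 ≤ n →
        ∀ (Δ : Fin n → Set (EuclideanSpace ℝ (Fin 2))),
          (∀ i, IsFatTriangle α (Δ i)) →
          ∃ Part : Finpartition (Finset.univ : Finset (Fin n)),
            (∀ P ∈ Part.parts, ∃ x : EuclideanSpace ℝ (Fin 2), ∀ i ∈ P, x ∈ Δ i) ∧
            (∀ x : EuclideanSpace ℝ (Fin 2),
              (({P : Finset (Fin n) | P ∈ Part.parts ∧ ∃ i ∈ P, x ∈ Δ i}).ncard : ℝ)
                ≤ c * (Real.logb 2 n + 1)) := by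
  have hsin : 0 < Real.sin α := Real.sin_pos_of_pos_of_lt_pi hα0 (by linarith [Real.pi_pos])
  obtain ⟨c, hc, hpart⟩ := stmt6_general (ι := Fin 2) (by positivity : 0 < Real.sin α ^ 2 / 6)
  refine ⟨c, hc, fun n hn Δ hΔ => ?_⟩
  have : Nonempty (Fin n) := ⟨⟨0, hn⟩⟩
  simpa only [Fintype.card_fin] using hpart (Fin n) Δ fun i => (hΔ i).exists_isFatAround hα0
end

section
/- There is an absolute constant c > 0 with the following property. Let (D_i)_{i ∈ I} be a finite family of closed disks in ℝ² with |I| = n ≥ 1, let 𝒫 be a partition of I such that each part P ∈ 𝒫 is stabbed (there is a point contained in every disk D_i with i ∈ P), and for P ∈ 𝒫 let F_P = ⋃_{i∈P} D_i be its flower. If every point x ∈ ℝ² is contained in at most k of the flowers, then the number of unordered pairs {P, P'} of distinct parts with F_P ∩ F_{P'} ≠ ∅ is at most c · n · k. -/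
open Metric

/-!
If two flowers meet, then a ball of one meets a ball of the other, and the larger of these two balls
contains a ball of the same radius `r` as the smaller one, with center at distance at most `2 * r`
from the center `a` of the smaller one. By compactness and scaling, finitely many vectors `t`,
independent of all data, are such that this inner ball always contains some point `a + r • t`.
Charge the pair of flowers to such a point: every ball offers a bounded number of points, and a
point lies in at most `k` flowers.
-/

open scoped Finset

section IntersectingPairs

variable {ι β X : Type*}

/-- The flower of a set `P` of indices: the union of the members `D i` with `i ∈ P`. -/
def flower (D : ι → Set X) (P : Finset ι) : Set X := ⋃ i ∈ P, D i

theorem mem_flower {D : ι → Set X} {P : Finset ι} {x : X} : x ∈ flower D P ↔ ∃ i ∈ P, x ∈ D i := by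
  simp only [flower, Set.mem_iUnion₂, exists_prop]

/-- The edges of the intersection graph of the sets `F P` with `P ∈ 𝒜`: the unordered pairs of
distinct indices whose sets meet. -/
def intersectingPairs (F : β → Set X) (𝒜 : Finset β) : Set (Sym2 β) :=
  {q | ∃ P ∈ 𝒜, ∃ P' ∈ 𝒜, q = s(P, P') ∧ P ≠ P' ∧ (F P ∩ F P').Nonempty}

theorem ncard_intersectingPairs_le_of_pairwise {F : β → Set X} {𝒜 : Finset β} (V : β → Finset X)
    (hV : (𝒜 : Set β).Pairwise fun P P' ↦ (F P ∩ F P').Nonempty →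
      (∃ x ∈ V P, x ∈ F P') ∨ ∃ x ∈ V P', x ∈ F P)
    {k : ℕ} (hk : ∀ x, {P | P ∈ 𝒜 ∧ x ∈ F P}.ncard ≤ k) :
    (intersectingPairs F 𝒜).ncard ≤ (∑ P ∈ 𝒜, #(V P)) * k := by
  classical
  let through (x : X) : Finset β := {P ∈ 𝒜 | x ∈ F P}
  let charged (P : β) : Finset (Sym2 β) := (V P).biUnion fun x ↦ (through x).image (s(P, ·))
  have card_charged (P : β) : #(charged P) ≤ #(V P) * k := by
    refine Finset.card_biUnion_le_card_mul _ _ k fun x _ ↦ Finset.card_image_le.trans ?_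
    simpa only [← Set.ncard_coe_finset, through, Finset.coe_filter] using hk x
  have mem_charged {P P' : β} (hP : P ∈ 𝒜) (hP' : P' ∈ 𝒜) (h : ∃ x ∈ V P, x ∈ F P') :
      s(P, P') ∈ 𝒜.biUnion charged := by
    obtain ⟨x, hxP, hxP'⟩ := h
    exact Finset.mem_biUnion.2 ⟨P, hP, Finset.mem_biUnion.2 ⟨x, hxP,
      Finset.mem_image_of_mem _ (Finset.mem_filter.2 ⟨hP', hxP'⟩)⟩⟩
  have subset_charged : intersectingPairs F 𝒜 ⊆ 𝒜.biUnion charged := by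
    rintro _ ⟨P, hP, P', hP', rfl, hne, hmeet⟩
    obtain h | h := hV hP hP' hne hmeet
    · exact mem_charged hP hP' h
    · exact Sym2.eq_swap ▸ mem_charged hP' hP h
  calc (intersectingPairs F 𝒜).ncard
    _ ≤ #(𝒜.biUnion charged) := by
      simpa only [Set.ncard_coe_finset] using Set.ncard_le_ncard subset_charged
    _ ≤ ∑ P ∈ 𝒜, #(V P) * k := Finset.card_biUnion_le.trans
      (Finset.sum_le_sum fun P _ ↦ card_charged P)
    _ = (∑ P ∈ 𝒜, #(V P)) * k := (Finset.sum_mul ..).symm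

theorem ncard_intersectingPairs_flower_le {D : ι → Set X} {W : ι → Finset X} {m : ℕ}
    (hm : ∀ i, #(W i) ≤ m)
    (hW : ∀ i j, (D i ∩ D j).Nonempty → (∃ x ∈ W i, x ∈ D j) ∨ ∃ x ∈ W j, x ∈ D i)
    {𝒜 : Finset (Finset ι)} {k : ℕ} (hk : ∀ x, {P | P ∈ 𝒜 ∧ x ∈ flower D P}.ncard ≤ k) :
    (intersectingPairs (flower D) 𝒜).ncard ≤ m * (∑ P ∈ 𝒜, #P) * k := by
  classical
  have mem_of_mem {P P' : Finset ι} {i j : ι} (hi : i ∈ P) (hj : j ∈ P')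
      (h : ∃ x ∈ W i, x ∈ D j) : ∃ x ∈ P.biUnion W, x ∈ flower D P' := by
    obtain ⟨x, hxi, hxj⟩ := h
    exact ⟨x, Finset.mem_biUnion.2 ⟨i, hi, hxi⟩, mem_flower.2 ⟨j, hj, hxj⟩⟩
  calc (intersectingPairs (flower D) 𝒜).ncard
    _ ≤ (∑ P ∈ 𝒜, #(P.biUnion W)) * k := by
      refine ncard_intersectingPairs_le_of_pairwise (fun P ↦ P.biUnion W) ?_ hk
      rintro P - P' - - ⟨x, hxP, hxP'⟩
      obtain ⟨i, hi, hxi⟩ := mem_flower.1 hxP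
      obtain ⟨j, hj, hxj⟩ := mem_flower.1 hxP'
      exact (hW i j ⟨x, hxi, hxj⟩).imp (mem_of_mem hi hj) (mem_of_mem hj hi)
    _ ≤ (∑ P ∈ 𝒜, #P * m) * k := by
      gcongr with P
      exact Finset.card_biUnion_le_card_mul _ _ _ fun i _ ↦ hm i
    _ = m * (∑ P ∈ 𝒜, #P) * k := by rw [← Finset.sum_mul, mul_comm m]

end IntersectingPairs

section Balls

theorem exists_closedBall_subset_closedBall_of_mem {E : Type*} [SeminormedAddCommGroup E]
    [NormedSpace ℝ E] {p b : E} {r R : ℝ} (hp : p ∈ closedBall b R) (hr : 0 ≤ r) (hrR : r ≤ R) :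
    ∃ q ∈ closedBall p r, closedBall q r ⊆ closedBall b R := by
  obtain ⟨q, hpq, hqb⟩ := exists_dist_le_le hr (sub_nonneg.2 hrR)
    (hp.trans_eq (sub_add_cancel R r).symm)
  exact ⟨q, mem_closedBall'.2 hpq, closedBall_subset_closedBall' (by linarith)⟩

variable (E : Type*) [NormedAddCommGroup E] [NormedSpace ℝ E] [ProperSpace E]

theorem exists_finset_closedBall_subset_iUnion_closedBall {ρ : ℝ} (hρ : 0 ≤ ρ) :
    ∃ T : Finset E, ∀ (a : E) {r : ℝ}, 0 ≤ r →
      closedBall a (r * ρ) ⊆ ⋃ t ∈ T, closedBall (a + r • t) r := by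
  obtain ⟨T, -, hT, hcover⟩ := (isCompact_closedBall (0 : E) ρ).finite_cover_balls one_pos
  refine ⟨hT.toFinset, fun a r hr x hx ↦ ?_⟩
  obtain ⟨u, hu, hux⟩ : ∃ u ∈ closedBall (0 : E) ρ, r • u = x - a := by
    rw [← Set.mem_smul_set, smul_closedBall r 0 hρ, smul_zero, Real.norm_of_nonneg hr]
    simpa [dist_eq_norm] using hx
  obtain ⟨t, ht, hut⟩ := Set.mem_iUnion₂.1 (hcover hu)
  refine Set.mem_iUnion₂.2 ⟨t, hT.mem_toFinset.2 ht, ?_⟩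
  calc dist x (a + r • t)
    _ = r * dist u t := by
      rw [← add_sub_cancel a x, ← hux, dist_add_left, dist_smul₀, Real.norm_of_nonneg hr]
    _ ≤ r := mul_le_of_le_one_right hr hut.le

theorem exists_finset_forall_exists_add_smul_mem_closedBall :
    ∃ T : Finset E, ∀ {a b : E} {r R : ℝ}, r ≤ R →
      (closedBall a r ∩ closedBall b R).Nonempty → ∃ t ∈ T, a + r • t ∈ closedBall b R := by
  obtain ⟨T, hT⟩ := exists_finset_closedBall_subset_iUnion_closedBall E zero_le_two
  refine ⟨T, fun {a b r R} hrR ⟨p, hpa, hpb⟩ ↦ ?_⟩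
  have hr : 0 ≤ r := nonempty_closedBall.1 ⟨p, hpa⟩
  obtain ⟨q, hqp, hqb⟩ := exists_closedBall_subset_closedBall_of_mem hpb hr hrR
  have hqa : q ∈ closedBall a (r * 2) := by
    rw [mem_closedBall] at hpa hqp ⊢
    linarith [dist_triangle q p a]
  obtain ⟨t, ht, hqt⟩ := Set.mem_iUnion₂.1 (hT a hr hqa)
  exact ⟨t, ht, hqb (mem_closedBall_comm.1 hqt)⟩

theorem stmt7_general : ∃ c : ℝ, 0 < c ∧
    ∀ {ι : Type*} (a : ι → E) (r : ι → ℝ) (𝒜 : Finset (Finset ι)) (k : ℕ),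
      (∀ x, {P | P ∈ 𝒜 ∧ x ∈ flower (fun i ↦ closedBall (a i) (r i)) P}.ncard ≤ k) →
      ((intersectingPairs (flower fun i ↦ closedBall (a i) (r i)) 𝒜).ncard : ℝ) ≤
        c * ↑(∑ P ∈ 𝒜, #P) * k := by
  classical
  obtain ⟨T, hT⟩ := exists_finset_forall_exists_add_smul_mem_closedBall E
  refine ⟨#T + 1, by positivity, fun a r 𝒜 k hk ↦ ?_⟩
  let W i : Finset E := T.image fun t ↦ a i + r i • t
  have hW i j (hij : (closedBall (a i) (r i) ∩ closedBall (a j) (r j)).Nonempty) :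
      (∃ x ∈ W i, x ∈ closedBall (a j) (r j)) ∨ ∃ x ∈ W j, x ∈ closedBall (a i) (r i) := by
    simp only [W, Finset.exists_mem_image]
    exact (le_total (r i) (r j)).imp (hT · hij) (hT · (Set.inter_comm .. ▸ hij))
  have card_W i : #(W i) ≤ #T + 1 := Finset.card_image_le.trans (Nat.le_succ _)
  exact_mod_cast ncard_intersectingPairs_flower_le card_W hW hk

end Balls

theorem stmt7 :
    ∃ c : ℝ, 0 < c ∧
      ∀ (n : ℕ), 1 ≤ n →
        ∀ (a : Fin n → EuclideanSpace ℝ (Fin 2)) (r : Fin n → ℝ),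
          (∀ i, 0 < r i) →
          ∀ Part : Finpartition (Finset.univ : Finset (Fin n)),
            (∀ P ∈ Part.parts, ∃ x : EuclideanSpace ℝ (Fin 2),
                ∀ i ∈ P, x ∈ closedBall (a i) (r i)) →
            ∀ k : ℕ,
              (∀ x : EuclideanSpace ℝ (Fin 2),
                ({P : Finset (Fin n) | P ∈ Part.parts ∧ ∃ i ∈ P,
                    x ∈ closedBall (a i) (r i)}).ncard ≤ k) →
              (({q : Sym2 (Finset (Fin n)) | ∃ P ∈ Part.parts, ∃ P' ∈ Part.parts,
                  q = s(P, P') ∧ P ≠ P' ∧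
                  ((⋃ i ∈ P, closedBall (a i) (r i)) ∩
                    ⋃ i ∈ P', closedBall (a i) (r i)).Nonempty}).ncard : ℝ)
                ≤ c * n * k := by
  obtain ⟨c, hc, hbound⟩ := stmt7_general (EuclideanSpace ℝ (Fin 2))
  refine ⟨c, hc, fun n _ a r _ Part _ k hk ↦ ?_⟩
  simpa only [intersectingPairs, flower, Part.sum_card_parts, Finset.card_fin] using
    hbound a r Part.parts k (by simpa only [mem_flower] using hk)
end
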